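/- Bounds on the max-information in terms of min-entropies: let ρ_AB be a nonzero sub-normalized state on H_A ⊗ H_B, let ρ_A = Tr_B[ρ_AB], and let λ_max(ρ_A) denote the largest eigenvalue and λ_min⁺(ρ_A) the smallest nonzero eigenvalue of ρ_A. Then −log λ_max(ρ_A) − H_min(A|B)_ρ ≤ I_max(A:B)_ρ ≤ −log λ_min⁺(ρ_A) − H_min(A|B)_ρ. (In the notation of the paper: H_min(A)_ρ − H_min(A|B)_ρ ≤ I_max(A:B)_ρ ≤ H_R(A)_ρ − H_min(A|B)_ρ.) -/

import Mathlib

open scoped Kronecker ComplexOrder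
open Matrix

noncomputable section

/-- Partial trace over the right tensor factor. -/
def ptraceRight {α β : Type*} [Fintype β] (M : Matrix (α × β) (α × β) ℂ) : Matrix α α ℂ :=
  Matrix.of fun i j => ∑ b, M (i, b) (j, b)

/-- The max-information `I_max(A:B)_ρ = inf_{σ_B state} D_max(ρ_AB ‖ ρ_A ⊗ σ_B)`, written
as a single base-2 logarithm of a joint infimum over `λ ≥ 0` and states `σ_B` with
`ρ_AB ≤ λ (ρ_A ⊗ σ_B)` in the Loewner order. -/
def Imax {α β : Type*} [Fintype α] [Fintype β] [DecidableEq α] [DecidableEq β]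
    (ρ : Matrix (α × β) (α × β) ℂ) : ℝ :=
  Real.logb 2 (sInf {lam : ℝ | 0 ≤ lam ∧ ∃ σ : Matrix β β ℂ, σ.PosSemidef ∧ σ.trace = 1 ∧
    (lam • (ptraceRight ρ ⊗ₖ σ) - ρ).PosSemidef})

/-- The conditional min-entropy
`H_min(A|B)_ρ = -log inf {λ > 0 | ρ_AB ≤ λ (1_A ⊗ σ_B) for some state σ_B}`. -/
def Hmin {α β : Type*} [Fintype α] [Fintype β] [DecidableEq α] [DecidableEq β]
    (ρ : Matrix (α × β) (α × β) ℂ) : ℝ :=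
  - Real.logb 2 (sInf {lam : ℝ | 0 < lam ∧ ∃ σ : Matrix β β ℂ, σ.PosSemidef ∧ σ.trace = 1 ∧
    (lam • ((1 : Matrix α α ℂ) ⊗ₖ σ) - ρ).PosSemidef})

/-- Largest eigenvalue of a Hermitian matrix (junk value `0` otherwise). -/
def lambdaMax {n : Type*} [Fintype n] [DecidableEq n] (A : Matrix n n ℂ) : ℝ :=
  if hA : A.IsHermitian then sSup (Set.range hA.eigenvalues) else 0

/-- Smallest nonzero eigenvalue of a Hermitian matrix (junk value `0` otherwise). -/
def lambdaMinPos {n : Type*} [Fintype n] [DecidableEq n] (A : Matrix n n ℂ) : ℝ :=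
  if hA : A.IsHermitian then sInf {t : ℝ | (∃ i, hA.eigenvalues i = t) ∧ t ≠ 0} else 0

/-!
For an operator `X` on the first factor put `D(X) = inf {l ≥ 0 | ∃ state σ, ρ ≤ l (X ⊗ σ)}`, so
that `I_max = log D(ρ_A)` and `H_min = -log D(1)`. If `X ≤ c Y` with `c ≥ 0`, then `D(Y) ≤ c D(X)`.
The lower bound is this monotonicity applied to `ρ_A ≤ λ_max(ρ_A) 1`. For the upper bound, let `P`
be the support projection of `ρ_A`. Then `P ≤ λ_min⁺(ρ_A)⁻¹ ρ_A` gives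
`D(ρ_A) ≤ λ_min⁺(ρ_A)⁻¹ D(P)`, and `D(P) ≤ D(1)` because `ρ` is supported on the range of `P ⊗ 1`,
so that compressing `ρ ≤ l (1 ⊗ σ)` by `P ⊗ 1` gives `ρ ≤ l (P ⊗ σ)`.
-/

open scoped MatrixOrder

theorem sub_kronecker {l m n p R : Type*} [NonUnitalNonAssocRing R] (A B : Matrix l m R)
    (C : Matrix n p R) : (A - B) ⊗ₖ C = A ⊗ₖ C - B ⊗ₖ C := by
  ext
  simp [sub_mul]

section PosSemidef

variable {𝕜 m n : Type*} [RCLike 𝕜]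

theorem trace_re_pos [Fintype n] {A : Matrix n n 𝕜} (hA : A.PosSemidef) (hA₀ : A ≠ 0) :
    0 < RCLike.re A.trace :=
  (RCLike.pos_iff.mp (hA.trace_nonneg.lt_of_ne' fun h ↦ hA₀ (hA.trace_eq_zero_iff.mp h))).1

theorem mul_eq_zero_iff_trace_conjTranspose_mul_mul_eq_zero [Fintype m] [Fintype n]
    {A : Matrix n n 𝕜} (hA : A.PosSemidef) (B : Matrix n m 𝕜) :
    A * B = 0 ↔ (Bᴴ * A * B).trace = 0 := by
  classical
  obtain ⟨C, rfl⟩ := CStarAlgebra.nonneg_iff_eq_star_mul_self.mp hA.nonneg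
  have conj_eq : Bᴴ * (Cᴴ * C) * B = (C * B)ᴴ * (C * B) := by
    simp only [conjTranspose_mul, Matrix.mul_assoc]
  rw [star_eq_conjTranspose, conj_eq, trace_conjTranspose_mul_self_eq_zero_iff,
    conjTranspose_mul_self_mul_eq_zero]

theorem kronecker_le_kronecker_left [Finite m] [Finite n] {A B : Matrix m m 𝕜} {C : Matrix n n 𝕜}
    (hAB : A ≤ B) (hC : C.PosSemidef) : A ⊗ₖ C ≤ B ⊗ₖ C := by
  rw [Matrix.le_iff, ← sub_kronecker]
  exact (Matrix.le_iff.mp hAB).kronecker hC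

theorem conjTranspose_mul_mul_le_conjTranspose_mul_mul [Finite m] [Fintype n]
    {A B : Matrix n n 𝕜} (hAB : A ≤ B) (C : Matrix n m 𝕜) : Cᴴ * A * C ≤ Cᴴ * B * C := by
  rw [Matrix.le_iff, ← Matrix.sub_mul, ← Matrix.mul_sub]
  exact (Matrix.le_iff.mp hAB).conjTranspose_mul_mul_same C

end PosSemidef

section Support

variable {𝕜 n : Type*} [RCLike 𝕜] [Fintype n] [DecidableEq n]

/-- The projection onto the range of a Hermitian matrix, obtained by applying the indicator function
of `{x | x ≠ 0}` in the functional calculus (junk value `0` otherwise). -/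
def supportProj (A : Matrix n n 𝕜) : Matrix n n 𝕜 :=
  cfc (fun x : ℝ ↦ if x = 0 then 0 else 1) A

theorem isStarProjection_supportProj (A : Matrix n n 𝕜) : IsStarProjection (supportProj A) where
  isIdempotentElem := by
    rw [IsIdempotentElem, supportProj, ← cfc_mul _ _ A (A.finite_real_spectrum.continuousOn _)
      (A.finite_real_spectrum.continuousOn _)]
    congr 1
    ext x
    split_ifs <;> simp
  isSelfAdjoint := cfc_predicate _ A

theorem mul_supportProj {A : Matrix n n 𝕜} (hA : A.IsHermitian) : A * supportProj A = A := by
  have hA' : IsSelfAdjoint A := hA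
  calc A * supportProj A = cfc (fun x : ℝ ↦ x) A * supportProj A := by rw [cfc_id' ℝ A]
    _ = cfc (fun x : ℝ ↦ x * if x = 0 then 0 else 1) A :=
      (cfc_mul _ _ A continuousOn_id (A.finite_real_spectrum.continuousOn _)).symm
    _ = cfc (fun x : ℝ ↦ x) A := by
      congr 1
      ext x
      split_ifs with hx <;> simp [hx]
    _ = A := cfc_id' ℝ A

theorem smul_supportProj_le {A : Matrix n n 𝕜} (hA : A.IsHermitian) {c : ℝ}
    (hc : ∀ x ∈ spectrum ℝ A, x ≠ 0 → c ≤ x) : c • supportProj A ≤ A := by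
  have hA' : IsSelfAdjoint A := hA
  have hcont (f : ℝ → ℝ) : ContinuousOn f (spectrum ℝ A) := A.finite_real_spectrum.continuousOn f
  conv_rhs => rw [← cfc_id' ℝ A]
  rw [supportProj, ← cfc_const_mul c _ A (hcont _)]
  refine cfc_mono (fun x hx ↦ ?_) (hcont _) (hcont _)
  by_cases h : x = 0
  · simp [h]
  · simpa [h] using hc x hx h

end Support

section ExtremalEigenvalues

variable {n : Type*} [Fintype n] [DecidableEq n] {A : Matrix n n ℂ}

theorem lambdaMax_eq_sSup_spectrum (hA : A.IsHermitian) :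
    lambdaMax A = sSup (spectrum ℝ A) := by
  rw [lambdaMax, dif_pos hA, hA.spectrum_real_eq_range_eigenvalues]

theorem lambdaMinPos_eq_sInf_spectrum (hA : A.IsHermitian) :
    lambdaMinPos A = sInf (spectrum ℝ A \ {0}) := by
  rw [lambdaMinPos, dif_pos hA, hA.spectrum_real_eq_range_eigenvalues]
  rfl

theorem le_lambdaMax_smul_one (hA : A.IsHermitian) : A ≤ lambdaMax A • 1 := by
  have hA' : IsSelfAdjoint A := hA
  rw [← Algebra.algebraMap_eq_smul_one, lambdaMax_eq_sSup_spectrum hA]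
  exact le_algebraMap_of_spectrum_le fun x hx ↦ le_csSup A.finite_real_spectrum.bddAbove hx

theorem lambdaMax_pos (hA : A.PosSemidef) (hA₀ : A ≠ 0) : 0 < lambdaMax A := by
  by_contra! h
  have lambdaMax_smul_one_le : lambdaMax A • (1 : Matrix n n ℂ) ≤ 0 :=
    smul_nonpos_of_nonpos_of_nonneg h PosSemidef.one.nonneg
  exact hA₀ (((le_lambdaMax_smul_one hA.isHermitian).trans lambdaMax_smul_one_le).antisymm
    hA.nonneg)

theorem lambdaMinPos_smul_supportProj_le (hA : A.IsHermitian) :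
    lambdaMinPos A • supportProj A ≤ A := by
  refine smul_supportProj_le hA fun x hx hx₀ ↦ ?_
  rw [lambdaMinPos_eq_sInf_spectrum hA]
  exact csInf_le A.finite_real_spectrum.sdiff.bddBelow ⟨hx, hx₀⟩

theorem lambdaMinPos_mem_spectrum (hA : A.IsHermitian) (hA₀ : A ≠ 0) :
    lambdaMinPos A ∈ spectrum ℝ A \ {0} := by
  have hA' : IsSelfAdjoint A := hA
  have hne : (spectrum ℝ A \ {0}).Nonempty :=
    Set.sdiff_nonempty.mpr fun h ↦ hA₀ (CFC.eq_zero_of_spectrum_subset_zero (R := ℝ) A h)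
  rw [lambdaMinPos_eq_sInf_spectrum hA]
  exact hne.csInf_mem A.finite_real_spectrum.sdiff

theorem lambdaMinPos_pos (hA : A.PosSemidef) (hA₀ : A ≠ 0) : 0 < lambdaMinPos A := by
  obtain ⟨hmem, hne⟩ := lambdaMinPos_mem_spectrum hA.isHermitian hA₀
  exact (spectrum_nonneg_of_nonneg hA.nonneg hmem).lt_of_ne' hne

theorem supportProj_le_inv_lambdaMinPos_smul (hA : A.PosSemidef) (hA₀ : A ≠ 0) :
    supportProj A ≤ (lambdaMinPos A)⁻¹ • A :=
  (le_inv_smul_iff_of_pos (lambdaMinPos_pos hA hA₀)).mpr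
    (lambdaMinPos_smul_supportProj_le hA.isHermitian)

end ExtremalEigenvalues

section PartialTrace

variable {α β : Type*} [Fintype β]

theorem ptraceRight_eq_sum_submatrix (M : Matrix (α × β) (α × β) ℂ) :
    ptraceRight M = ∑ b, M.submatrix (·, b) (·, b) := by
  ext
  simp [ptraceRight, Matrix.sum_apply]

theorem posSemidef_ptraceRight {ρ : Matrix (α × β) (α × β) ℂ} (hρ : ρ.PosSemidef) :
    (ptraceRight ρ).PosSemidef := by
  rw [ptraceRight_eq_sum_submatrix]
  exact posSemidef_sum _ fun b _ ↦ hρ.submatrix _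

theorem trace_ptraceRight [Fintype α] (M : Matrix (α × β) (α × β) ℂ) :
    (ptraceRight M).trace = M.trace := by
  simp [Matrix.trace, ptraceRight, Fintype.sum_prod_type]

theorem ptraceRight_ne_zero [Finite α] {ρ : Matrix (α × β) (α × β) ℂ} (hρ : ρ.PosSemidef)
    (hρ₀ : ρ ≠ 0) : ptraceRight ρ ≠ 0 := by
  have := Fintype.ofFinite α
  exact fun h ↦ hρ₀ (hρ.trace_eq_zero_iff.mp (by rw [← trace_ptraceRight, h, trace_zero]))

variable [Fintype α]

theorem ptraceRight_mul_kronecker_one [DecidableEq β] (M : Matrix (α × β) (α × β) ℂ)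
    (Q : Matrix α α ℂ) : ptraceRight (M * (Q ⊗ₖ 1)) = ptraceRight M * Q := by
  ext i j
  simp only [ptraceRight, of_apply, Matrix.mul_apply, kronecker_apply, one_apply,
    Fintype.sum_prod_type, Finset.sum_mul, mul_ite, mul_one, mul_zero, Finset.sum_ite_eq',
    Finset.mem_univ, if_true]
  exact Finset.sum_comm

theorem mul_kronecker_one_eq_zero [DecidableEq β] {ρ : Matrix (α × β) (α × β) ℂ}
    (hρ : ρ.PosSemidef) {Q : Matrix α α ℂ} (hQ : ptraceRight ρ * Q = 0) :
    ρ * (Q ⊗ₖ (1 : Matrix β β ℂ)) = 0 := by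
  have trace_eq : ((Q ⊗ₖ (1 : Matrix β β ℂ))ᴴ * ρ * (Q ⊗ₖ (1 : Matrix β β ℂ))).trace =
      (ptraceRight ρ * Q * Qᴴ).trace := by
    rw [Matrix.mul_assoc, trace_mul_comm, conjTranspose_kronecker, conjTranspose_one,
      Matrix.mul_assoc, ← mul_kronecker_mul, one_mul, ← trace_ptraceRight,
      ptraceRight_mul_kronecker_one, Matrix.mul_assoc]
  rw [mul_eq_zero_iff_trace_conjTranspose_mul_mul_eq_zero hρ, trace_eq, hQ, Matrix.zero_mul,
    trace_zero]

theorem mul_supportProj_kronecker_one [DecidableEq α] [DecidableEq β]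
    {ρ : Matrix (α × β) (α × β) ℂ} (hρ : ρ.PosSemidef) :
    ρ * (supportProj (ptraceRight ρ) ⊗ₖ (1 : Matrix β β ℂ)) = ρ := by
  have compl_eq_zero : ρ * ((supportProj (ptraceRight ρ) - 1) ⊗ₖ (1 : Matrix β β ℂ)) = 0 :=
    mul_kronecker_one_eq_zero hρ <| by
      rw [mul_sub, mul_supportProj (posSemidef_ptraceRight hρ).isHermitian, mul_one, sub_self]
  rwa [sub_kronecker, one_kronecker_one, mul_sub, mul_one, sub_eq_zero] at compl_eq_zero

end PartialTrace

section Domination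

variable {α β γ : Type*} [Fintype β] {ρ : Matrix (α × β) (α × β) ℂ} {X Y : Matrix α α ℂ} {l c : ℝ}

/-- The factors `l ≥ 0` such that `ρ ≤ l (X ⊗ σ)` for some state `σ` of the second tensor factor. -/
def dominationFactors (ρ : Matrix (α × β) (α × β) ℂ) (X : Matrix α α ℂ) : Set ℝ :=
  {l | 0 ≤ l ∧ ∃ σ : Matrix β β ℂ, σ.PosSemidef ∧ σ.trace = 1 ∧ ρ ≤ l • (X ⊗ₖ σ)}

/-- The infimum of `2 ^ D_max(ρ ‖ X ⊗ σ)` over the states `σ` of the second tensor factor. It is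
the quantity inside the logarithm of `Imax` for `X = ρ_A` and of `Hmin` for `X = 1`. -/
def dominationConst (ρ : Matrix (α × β) (α × β) ℂ) (X : Matrix α α ℂ) : ℝ :=
  sInf (dominationFactors ρ X)

theorem bddBelow_dominationFactors : BddBelow (dominationFactors ρ X) :=
  ⟨0, fun _ hl ↦ hl.1⟩

theorem mul_mem_dominationFactors [Finite α] (hXY : X ≤ c • Y) (hc : 0 ≤ c)
    (hl : l ∈ dominationFactors ρ X) : c * l ∈ dominationFactors ρ Y := by
  have := Fintype.ofFinite α
  obtain ⟨hl₀, σ, hσ, hσ_tr, hle⟩ := hl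
  refine ⟨mul_nonneg hc hl₀, σ, hσ, hσ_tr, ?_⟩
  calc ρ ≤ l • (X ⊗ₖ σ) := hle
    _ ≤ l • ((c • Y) ⊗ₖ σ) :=
      smul_le_smul_of_nonneg_left (kronecker_le_kronecker_left hXY hσ) hl₀
    _ = (c * l) • (Y ⊗ₖ σ) := by rw [smul_kronecker, smul_smul, mul_comm]

theorem conjTranspose_mul_mul_mem_dominationFactors [Fintype α] [Finite γ] [DecidableEq β]
    (hl : l ∈ dominationFactors ρ X) (Q : Matrix α γ ℂ) :
    l ∈ dominationFactors ((Q ⊗ₖ (1 : Matrix β β ℂ))ᴴ * ρ * (Q ⊗ₖ (1 : Matrix β β ℂ)))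
      (Qᴴ * X * Q) := by
  obtain ⟨hl₀, σ, hσ, hσ_tr, hle⟩ := hl
  refine ⟨hl₀, σ, hσ, hσ_tr, ?_⟩
  convert conjTranspose_mul_mul_le_conjTranspose_mul_mul hle (Q ⊗ₖ (1 : Matrix β β ℂ)) using 1
  rw [Matrix.mul_smul, Matrix.smul_mul, conjTranspose_kronecker, conjTranspose_one,
    ← mul_kronecker_mul, ← mul_kronecker_mul, one_mul, mul_one]

theorem trace_re_le_of_mem_dominationFactors [Fintype α] (hl : l ∈ dominationFactors ρ X) :
    ρ.trace.re ≤ l * X.trace.re := by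
  obtain ⟨-, σ, -, hσ_tr, hle⟩ := hl
  have := (Complex.le_def.mp (Matrix.le_iff.mp hle).trace_nonneg).1
  simpa [trace_sub, trace_smul, trace_kronecker, hσ_tr] using this

theorem dominationConst_le_mul [Finite α] (hXY : X ≤ c • Y) (hc : 0 ≤ c)
    (hX : (dominationFactors ρ X).Nonempty) :
    dominationConst ρ Y ≤ c * dominationConst ρ X := by
  rw [dominationConst, dominationConst, ← smul_eq_mul, ← Real.sInf_smul_of_nonneg hc]
  refine csInf_le_csInf bddBelow_dominationFactors hX.smul_set ?_
  rintro _ ⟨l, hl, rfl⟩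
  exact mul_mem_dominationFactors hXY hc hl

theorem dominationConst_pos [Finite α] (hρ : ρ.PosSemidef) (hρ₀ : ρ ≠ 0)
    (hX : (dominationFactors ρ X).Nonempty) : 0 < dominationConst ρ X := by
  have := Fintype.ofFinite α
  have trace_ρ_pos : 0 < ρ.trace.re := trace_re_pos hρ hρ₀
  have trace_X_pos : 0 < X.trace.re := by
    obtain ⟨l, hl⟩ := hX
    exact pos_of_mul_pos_right
      (trace_ρ_pos.trans_le (trace_re_le_of_mem_dominationFactors hl)) hl.1
  calc 0 < ρ.trace.re / X.trace.re := div_pos trace_ρ_pos trace_X_pos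
    _ ≤ dominationConst ρ X := le_csInf hX fun l hl ↦
      (div_le_iff₀ trace_X_pos).mpr (trace_re_le_of_mem_dominationFactors hl)

theorem dominationFactors_one_nonempty [Finite α] [DecidableEq α] [Nonempty β]
    (hρ : ρ.IsHermitian) : (dominationFactors ρ (1 : Matrix α α ℂ)).Nonempty := by
  classical
  have := Fintype.ofFinite α
  have card_pos : (0 : ℝ) < Fintype.card β := Nat.cast_pos.mpr Fintype.card_pos
  refine ⟨|lambdaMax ρ| * Fintype.card β, by positivity, (Fintype.card β : ℝ)⁻¹ • 1,
    PosSemidef.one.smul (by positivity), ?_, ?_⟩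
  · have card_ne_zero : (Fintype.card β : ℂ) ≠ 0 := Nat.cast_ne_zero.mpr Fintype.card_ne_zero
    simp [trace_smul, card_ne_zero]
  · calc ρ ≤ lambdaMax ρ • 1 := le_lambdaMax_smul_one hρ
      _ ≤ |lambdaMax ρ| • 1 :=
        smul_le_smul_of_nonneg_right (le_abs_self _) PosSemidef.one.nonneg
      _ = (|lambdaMax ρ| * Fintype.card β) • (1 ⊗ₖ ((Fintype.card β : ℝ)⁻¹ • 1)) := by
        rw [kronecker_smul, smul_smul, mul_inv_cancel_right₀ card_pos.ne', one_kronecker_one]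

theorem dominationFactors_one_subset_supportProj [Fintype α] [DecidableEq α]
    (hρ : ρ.PosSemidef) :
    dominationFactors ρ 1 ⊆ dominationFactors ρ (supportProj (ptraceRight ρ)) := by
  classical
  intro l hl
  have hP := isStarProjection_supportProj (ptraceRight ρ)
  have mul_eq := mul_supportProj_kronecker_one hρ
  have compress_eq : (supportProj (ptraceRight ρ) ⊗ₖ (1 : Matrix β β ℂ))ᴴ * ρ *
      (supportProj (ptraceRight ρ) ⊗ₖ 1) = ρ := by
    rw [Matrix.mul_assoc, mul_eq]
    simpa only [conjTranspose_mul, hρ.isHermitian.eq] using congrArg conjTranspose mul_eq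
  have hl' := conjTranspose_mul_mul_mem_dominationFactors hl (supportProj (ptraceRight ρ))
  rwa [compress_eq, Matrix.mul_one, ← star_eq_conjTranspose, hP.isSelfAdjoint.star_eq,
    hP.isIdempotentElem.eq] at hl'

theorem dominationFactors_ptraceRight_nonempty [Finite α] [Nonempty β] (hρ : ρ.PosSemidef)
    (hρ₀ : ρ ≠ 0) : (dominationFactors ρ (ptraceRight ρ)).Nonempty := by
  classical
  have := Fintype.ofFinite α
  have hR := posSemidef_ptraceRight hρ
  have hR₀ := ptraceRight_ne_zero hρ hρ₀
  obtain ⟨l, hl⟩ := dominationFactors_one_nonempty hρ.isHermitian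
  exact ⟨_, mul_mem_dominationFactors (supportProj_le_inv_lambdaMinPos_smul hR hR₀)
    (inv_pos.mpr (lambdaMinPos_pos hR hR₀)).le (dominationFactors_one_subset_supportProj hρ hl)⟩

variable [Fintype α] [DecidableEq α]

theorem dominationConst_one_le_lambdaMax_mul [Nonempty β] (hρ : ρ.PosSemidef) (hρ₀ : ρ ≠ 0) :
    dominationConst ρ 1 ≤
      lambdaMax (ptraceRight ρ) * dominationConst ρ (ptraceRight ρ) :=
  have hR := posSemidef_ptraceRight hρ
  dominationConst_le_mul (le_lambdaMax_smul_one hR.isHermitian)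
    (lambdaMax_pos hR (ptraceRight_ne_zero hρ hρ₀)).le
    (dominationFactors_ptraceRight_nonempty hρ hρ₀)

theorem dominationConst_ptraceRight_le_inv_lambdaMinPos_mul [Nonempty β] (hρ : ρ.PosSemidef)
    (hρ₀ : ρ ≠ 0) : dominationConst ρ (ptraceRight ρ) ≤
      (lambdaMinPos (ptraceRight ρ))⁻¹ * dominationConst ρ 1 := by
  have hR := posSemidef_ptraceRight hρ
  have hR₀ := ptraceRight_ne_zero hρ hρ₀
  have inv_nonneg : 0 ≤ (lambdaMinPos (ptraceRight ρ))⁻¹ :=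
    (inv_pos.mpr (lambdaMinPos_pos hR hR₀)).le
  have one_nonempty := dominationFactors_one_nonempty hρ.isHermitian
  have subset_supportProj := dominationFactors_one_subset_supportProj hρ
  calc dominationConst ρ (ptraceRight ρ)
      ≤ (lambdaMinPos (ptraceRight ρ))⁻¹ * dominationConst ρ (supportProj (ptraceRight ρ)) :=
        dominationConst_le_mul (supportProj_le_inv_lambdaMinPos_smul hR hR₀) inv_nonneg
          (one_nonempty.mono subset_supportProj)
    _ ≤ (lambdaMinPos (ptraceRight ρ))⁻¹ * dominationConst ρ 1 :=
        mul_le_mul_of_nonneg_left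
          (csInf_le_csInf bddBelow_dominationFactors one_nonempty subset_supportProj) inv_nonneg

variable [DecidableEq β]

theorem Imax_eq_logb_dominationConst (ρ : Matrix (α × β) (α × β) ℂ) :
    Imax ρ = Real.logb 2 (dominationConst ρ (ptraceRight ρ)) :=
  rfl

theorem Hmin_eq_neg_logb_dominationConst (hρ : ρ.PosSemidef) (hρ₀ : ρ ≠ 0) :
    Hmin ρ = -Real.logb 2 (dominationConst ρ 1) := by
  have pos_of_mem {l : ℝ} (hl : l ∈ dominationFactors ρ 1) : 0 < l := by
    refine hl.1.lt_of_ne' ?_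
    rintro rfl
    have := trace_re_le_of_mem_dominationFactors hl
    rw [zero_mul] at this
    exact this.not_gt (trace_re_pos hρ hρ₀)
  rw [Hmin, dominationConst]
  congr 3
  ext l
  exact ⟨fun hl ↦ ⟨hl.1.le, hl.2⟩, fun hl ↦ ⟨pos_of_mem hl, hl.2⟩⟩

theorem imax_minentropy_bounds_general (ρ : Matrix (α × β) (α × β) ℂ) (hρ : ρ.PosSemidef)
    (hρ₀ : ρ ≠ 0) :
    -Real.logb 2 (lambdaMax (ptraceRight ρ)) - Hmin ρ ≤ Imax ρ ∧
      Imax ρ ≤ -Real.logb 2 (lambdaMinPos (ptraceRight ρ)) - Hmin ρ := by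
  have : Nonempty β := by
    by_contra! hβ
    exact hρ₀ (Subsingleton.elim _ _)
  have hR := posSemidef_ptraceRight hρ
  have hR₀ := ptraceRight_ne_zero hρ hρ₀
  have const_one_pos := dominationConst_pos hρ hρ₀ (dominationFactors_one_nonempty hρ.isHermitian)
  have const_R_pos := dominationConst_pos hρ hρ₀ (dominationFactors_ptraceRight_nonempty hρ hρ₀)
  have lower := Real.logb_le_logb_of_le one_lt_two const_one_pos
    (dominationConst_one_le_lambdaMax_mul hρ hρ₀)
  have upper := Real.logb_le_logb_of_le one_lt_two const_R_pos
    (dominationConst_ptraceRight_le_inv_lambdaMinPos_mul hρ hρ₀)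
  rw [Real.logb_mul (lambdaMax_pos hR hR₀).ne' const_R_pos.ne'] at lower
  rw [Real.logb_mul (inv_ne_zero (lambdaMinPos_pos hR hR₀).ne') const_one_pos.ne',
    Real.logb_inv] at upper
  rw [Imax_eq_logb_dominationConst, Hmin_eq_neg_logb_dominationConst hρ hρ₀]
  constructor <;> linarith

end Domination

/-- **Bounds on the max-information in terms of min-entropies**:
`H_min(A)_ρ − H_min(A|B)_ρ ≤ I_max(A:B)_ρ ≤ H_R(A)_ρ − H_min(A|B)_ρ`, where
`H_min(A)_ρ = −log λ_max(ρ_A)` and `H_R(A)_ρ = −log λ_min⁺(ρ_A)`. -/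
theorem imax_minentropy_bounds
    {α β : Type*} [Fintype α] [Fintype β] [DecidableEq α] [DecidableEq β]
    (ρ : Matrix (α × β) (α × β) ℂ)
    (hρ : ρ.PosSemidef) (hρtr : ρ.trace.re ≤ 1) (hρne : ρ ≠ 0) :
    - Real.logb 2 (lambdaMax (ptraceRight ρ)) - Hmin ρ ≤ Imax ρ ∧
      Imax ρ ≤ - Real.logb 2 (lambdaMinPos (ptraceRight ρ)) - Hmin ρ :=
  imax_minentropy_bounds_general ρ hρ hρne
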